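/- Let (L_k)_{k≥1} be an increasing sequence of positive integers tending to infinity. Then there exist a real number ν ∈ (0,1/2), sequences (p_k)_{k≥1}, (q_k)_{k≥1} of positive integers, and a constant C > 0 independent of k, such that, setting (μ₁,μ₂,μ₃) := (e^{−1}, e^{ν}, e^{e}) and P_k := (p_k, q_k, 0) ∈ ℕ³: (a) for every nonzero R = (r₁,r₂,r₃) ∈ ℤ³ one has μ^R := μ₁^{r₁}·μ₂^{r₂}·μ₃^{r₃} ≠ 1; and (b) for every k, |μ^{P_k} − μ₃| ≤ (C·Δ*(P_k))^{|P_k|·L_k}, where |R| := |r₁|+|r₂|+|r₃| and Δ*(P_k) is the minimum of |μ^R − μ_j| over all j ∈ {1,2,3} and all R ∈ ℤ³ with |R| ≤ 2(p_k+q_k)+1 and R − e_j ∉ {(0,0,0), (p_k,q_k,−1), −(p_k,q_k,−1), 2(p_k,q_k,−1), −2(p_k,q_k,−1)}, e_j denoting the j-th standard basis vector of ℤ³. -/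

import Mathlib

/-! For integers `p, q ≥ 1` the parameter `ν₀ = (p + θ) / q` makes `(e⁻¹, e^ν₀, e^θ)` exactly
resonant: `e^(-p + q ν₀) = e^θ`, and since `θ` is irrational every multiplicative relation is a
multiple of `T = (p, q, -1)`. A relation coming from a divisor `μ^R - μ_j` with
`|R| ≤ 2(p + q) + 1 < 2|T|` is thus one of `0, ±T, ±2T`, so at `ν₀` the small divisor is positive
while the resonant error `e^(-p + q ν₀) - e^θ` vanishes. By continuity, any prescribed power of the
small divisor dominates the error on a neighbourhood of `ν₀`. The points `ν₀` are dense in `(0, ∞)`,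
so by Baire's theorem generic `ν > 0` meets countably many such requirements while avoiding the
countably many exact resonances. -/

open Filter Set Topology

section Irrational

lemma exists_nat_eq_factorial_mul_sum_inv_factorial (n : ℕ) :
    ∃ s : ℕ, (n.factorial : ℝ) * ∑ m ∈ Finset.range (n + 1), (m.factorial : ℝ)⁻¹ = s := by
  refine ⟨∑ m ∈ Finset.range (n + 1), n.factorial / m.factorial, ?_⟩
  rw [Finset.mul_sum, Nat.cast_sum]
  refine Finset.sum_congr rfl fun m hm => ?_
  have hmn : m ≤ n := Finset.mem_range_succ_iff.mp hm
  rw [Nat.cast_div (Nat.factorial_dvd_factorial hmn) (by positivity), div_eq_mul_inv]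

lemma factorial_mul_exp_one_sub_sum_mem_Ioo {n : ℕ} (hn : 0 < n) :
    n.factorial * (Real.exp 1 - ∑ m ∈ Finset.range (n + 1), (m.factorial : ℝ)⁻¹) ∈
      Ioo (0 : ℝ) 1 := by
  have hlower := Real.sum_le_exp_of_nonneg zero_le_one (n + 2)
  have hupper := Real.exp_bound' zero_le_one le_rfl n.succ_pos
  rw [Finset.sum_range_succ] at hlower
  simp only [one_pow, one_div, one_mul, Nat.succ_eq_add_one] at hlower hupper
  have htail : (0 : ℝ) < ((n + 1).factorial : ℝ)⁻¹ := by positivity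
  refine ⟨mul_pos (by positivity) (by linarith), ?_⟩
  calc n.factorial * (Real.exp 1 - ∑ m ∈ Finset.range (n + 1), (m.factorial : ℝ)⁻¹)
      ≤ n.factorial * (((n + 1 : ℕ) + 1) / ((n + 1).factorial * (n + 1 : ℕ))) := by
        gcongr
        linarith
    _ = (n + 2) / (n + 1) ^ 2 := by
        push_cast [Nat.factorial_succ]
        field_simp
        ring
    _ < 1 := by
        have hn' : (1 : ℝ) ≤ n := by exact_mod_cast hn
        rw [div_lt_one (by positivity)]
        nlinarith

lemma irrational_exp_one : Irrational (Real.exp 1) := by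
  rintro ⟨r, hr⟩
  obtain ⟨s, hs⟩ := exists_nat_eq_factorial_mul_sum_inv_factorial r.den
  obtain ⟨c, hc⟩ := Nat.dvd_factorial r.den_pos le_rfl
  have hint : (r.den.factorial : ℝ) * Real.exp 1 = ((r.num * c : ℤ) : ℝ) := by
    have hrden : (r : ℝ) * r.den = r.num := by exact_mod_cast r.mul_den_eq_num
    rw [← hr, hc]
    push_cast
    rw [← hrden]
    ring
  obtain ⟨hpos, hlt⟩ := factorial_mul_exp_one_sub_sum_mem_Ioo r.den_pos
  rw [mul_sub, hint, hs] at hpos hlt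
  have hpos' : 0 < r.num * c - s := by exact_mod_cast hpos
  have hlt' : r.num * c - s < 1 := by exact_mod_cast hlt
  omega

lemma intCast_add_intCast_mul_irrational_eq_zero_iff {θ : ℝ} (hθ : Irrational θ) {a b : ℤ} :
    a + b * θ = 0 ↔ a = 0 ∧ b = 0 := by
  constructor
  · intro h
    obtain rfl : b = 0 := by
      by_contra hb
      exact ((hθ.intCast_mul hb).intCast_add a).ne_zero h
    simpa using h
  · rintro ⟨rfl, rfl⟩
    simp

end Irrational

section Topology

lemma continuousAt_sInf_image {X ι α : Type*} [TopologicalSpace X]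
    [ConditionallyCompleteLinearOrder α] [TopologicalSpace α] [OrderClosedTopology α] {s : Set ι}
    (hs : s.Finite) {f : ι → X → α} {x : X} (hf : ∀ i ∈ s, ContinuousAt (f i) x) :
    ContinuousAt (fun y => sInf ((f · y) '' s)) x := by
  lift s to Finset ι using hs
  rcases s.eq_empty_or_nonempty with rfl | hne
  · simp only [Finset.coe_empty, image_empty]
    exact continuousAt_const
  · simp only [← Finset.inf'_eq_csInf_image s hne]
    exact ContinuousAt.finset_inf'_apply hne hf

lemma eventually_residual_of_subset_closure {X : Type*} [TopologicalSpace X] {A D : Set X}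
    (hAD : A ⊆ closure D) {P : X → Prop} (hP : ∀ x ∈ D, ∀ᶠ y in 𝓝 x, P y) :
    ∀ᶠ x in residual X, x ∈ A → P x := by
  have hDG : D ⊆ interior {x | P x} := fun x hx => mem_interior_iff_mem_nhds.mpr (hP x hx)
  have hdense : Dense (interior {x | P x} ∪ (closure D)ᶜ) := by
    intro x
    by_cases hx : x ∈ closure D
    · exact closure_mono (hDG.trans subset_union_left) hx
    · exact subset_closure (Or.inr hx)
  filter_upwards [residual_of_dense_open
    (isOpen_interior.union isClosed_closure.isOpen_compl) hdense] with x hx hxA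
  exact hx.elim (fun h => interior_subset h) fun h => absurd (hAD hxA) h

lemma Ioi_zero_subset_closure_natCast_add_div (θ : ℝ) :
    Ioi 0 ⊆ closure {x : ℝ | ∃ p q : ℕ, 0 < p ∧ 0 < q ∧ x = (p + θ) / q} := by
  intro x (hx : 0 < x)
  have hlim : Tendsto (fun n : ℕ => ((⌊x * n⌋₊ : ℝ) + θ) / n) atTop (𝓝 x) := by
    have hfloor := (tendsto_nat_floor_mul_div_atTop hx.le).comp
      (tendsto_natCast_atTop_atTop (R := ℝ))
    simpa [Function.comp_def, add_div] using
      hfloor.add (tendsto_const_div_atTop_nhds_zero_nat θ)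
  refine mem_closure_of_tendsto hlim ?_
  have hfloor_pos : ∀ᶠ n : ℕ in atTop, 1 ≤ x * n :=
    (tendsto_natCast_atTop_atTop.const_mul_atTop hx).eventually_ge_atTop 1
  filter_upwards [hfloor_pos, eventually_gt_atTop 0] with n hn hn0
  exact ⟨_, n, Nat.floor_pos.mpr hn, hn0, rfl⟩

end Topology

section LaurentMonomial

variable {ι K : Type*} [Fintype ι] [Field K] {μ : ι → K}

/-- The Laurent monomial `μ^R = ∏ i, μ_i ^ R_i` with integer exponent vector `R`. -/
def laurentMonomial (μ : ι → K) (R : ι → ℤ) : K :=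
  ∏ i, μ i ^ R i

lemma laurentMonomial_sub (hμ : ∀ i, μ i ≠ 0) (R S : ι → ℤ) :
    laurentMonomial μ (R - S) = laurentMonomial μ R / laurentMonomial μ S := by
  simp only [laurentMonomial, Pi.sub_apply, zpow_sub₀ (hμ _), Finset.prod_div_distrib]

lemma laurentMonomial_single [DecidableEq ι] (μ : ι → K) (j : ι) :
    laurentMonomial μ (Pi.single j 1) = μ j := by
  rw [laurentMonomial, Finset.prod_eq_single j] <;> simp +contextual

lemma laurentMonomial_eq_one_iff_sum_mul_log {μ : ι → ℝ} (hμ : ∀ i, 0 < μ i) (R : ι → ℤ) :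
    laurentMonomial μ R = 1 ↔ ∑ i, R i * Real.log (μ i) = 0 := by
  have hpos : 0 < laurentMonomial μ R := Finset.prod_pos fun i _ => zpow_pos (hμ i) _
  have hlog : Real.log (laurentMonomial μ R) = ∑ i, R i * Real.log (μ i) := by
    rw [laurentMonomial, Real.log_prod fun i _ => (zpow_pos (hμ i) _).ne']
    simp only [Real.log_zpow]
  rw [← hlog, ← Real.log_one, Real.log_injOn_pos.eq_iff hpos (mem_Ioi.mpr one_pos)]

lemma continuousAt_laurentMonomial [TopologicalSpace K] [ContinuousInv₀ K] [ContinuousMul K]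
    (hμ : ∀ i, μ i ≠ 0) (R : ι → ℤ) :
    ContinuousAt (fun μ' => laurentMonomial μ' R) μ :=
  tendsto_finsetProd _ fun i _ => (continuousAt_apply i μ).zpow₀ (R i) (Or.inl (hμ i))

end LaurentMonomial

section SmallDivisor

variable {ι : Type*} [Fintype ι] [DecidableEq ι] {T R : ι → ℤ} {M : ℤ} {j : ι}

/-- The divisor `μ^R - μ_j` counts as nonresonant of order at most `M`, relative to a relation
vector `T`: the `ℓ¹`-norm of `R` is at most `M` and `R - e_j` is none of `0, ±T, ±2T`. -/
def IsNonresonant (T : ι → ℤ) (M : ℤ) (j : ι) (R : ι → ℤ) : Prop :=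
  ∑ i, |R i| ≤ M ∧
    R - Pi.single j 1 ≠ 0 ∧ R - Pi.single j 1 ≠ T ∧ R - Pi.single j 1 ≠ -T ∧
    R - Pi.single j 1 ≠ (2 : ℤ) • T ∧ R - Pi.single j 1 ≠ -((2 : ℤ) • T)

lemma isNonresonant_zero {i : ι} (hij : i ≠ j) (hi : T i ≠ 0) (hM : 0 ≤ M) :
    IsNonresonant T M j 0 := by
  have hne {S : ι → ℤ} (hS : S i ≠ 0) : 0 - Pi.single j 1 ≠ S := fun h =>
    hS (by simp [← h, hij])
  refine ⟨by simpa using hM, fun h => ?_, hne hi, hne (by simpa), hne (by simpa), hne (by simpa)⟩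
  simpa using congrFun h j

lemma finite_isNonresonant (T : ι → ℤ) (M : ℤ) :
    {x : ι × (ι → ℤ) | IsNonresonant T M x.1 x.2}.Finite := by
  refine (finite_univ.prod (finite_Icc (fun _ : ι => -M) fun _ => M)).subset ?_
  rintro ⟨j, R⟩ ⟨hR, -⟩
  have hle (i : ι) : |R i| ≤ M :=
    (Finset.single_le_sum (f := fun i => |R i|) (fun _ _ => abs_nonneg _)
      (Finset.mem_univ i)).trans hR
  exact ⟨mem_univ j, fun i => (abs_le.mp (hle i)).1, fun i => (abs_le.mp (hle i)).2⟩

lemma sum_abs_sub_single_le (R : ι → ℤ) (j : ι) :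
    ∑ i, |(R - Pi.single j 1 : ι → ℤ) i| ≤ ∑ i, |R i| + 1 :=
  calc ∑ i, |(R - Pi.single j 1 : ι → ℤ) i|
      ≤ ∑ i, (|R i| + |(Pi.single j 1 : ι → ℤ) i|) :=
        Finset.sum_le_sum fun i _ => abs_sub (R i) _
    _ = ∑ i, |R i| + 1 := by
        simp [Finset.sum_add_distrib, Pi.single_apply, apply_ite abs]

lemma IsNonresonant.sub_single_ne_zsmul (h : IsNonresonant T M j R)
    (hM : M < 2 * ∑ i, |T i|) (m : ℤ) : R - Pi.single j 1 ≠ m • T := by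
  obtain ⟨hR, h0, h1, h1', h2, h2'⟩ := h
  intro hm
  have hnorm : |m| * ∑ i, |T i| ≤ 2 * ∑ i, |T i| :=
    calc |m| * ∑ i, |T i| = ∑ i, |(R - Pi.single j 1 : ι → ℤ) i| := by
          simp only [hm, Pi.smul_apply, smul_eq_mul, abs_mul, Finset.mul_sum]
      _ ≤ ∑ i, |R i| + 1 := sum_abs_sub_single_le R j
      _ ≤ 2 * ∑ i, |T i| := by omega
  have hT : 0 < ∑ i, |T i| := by
    have := Finset.sum_nonneg fun i (_ : i ∈ Finset.univ) => abs_nonneg (R i)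
    omega
  obtain ⟨hlower, hupper⟩ := abs_le.mp (le_of_mul_le_mul_right hnorm hT)
  interval_cases m
  · exact h2' (by rw [hm, neg_smul])
  · exact h1' (by rw [hm, neg_one_smul])
  · exact h0 (by rw [hm, zero_smul])
  · exact h1 (by rw [hm, one_smul])
  · exact h2 hm

/-- The small divisor `Δ*`: the least `|μ^R - μ_j|` over all nonresonant `(j, R)` of order at
most `M`. There are finitely many such pairs, so this is a minimum unless there are none, in which
case it is `0`. -/
noncomputable def smallDivisor (μ : ι → ℝ) (T : ι → ℤ) (M : ℤ) : ℝ :=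
  sInf {x | ∃ j R, IsNonresonant T M j R ∧ x = |laurentMonomial μ R - μ j|}

lemma smallDivisor_eq_sInf_image (μ : ι → ℝ) (T : ι → ℤ) (M : ℤ) :
    smallDivisor μ T M = sInf ((fun x : ι × (ι → ℤ) => |laurentMonomial μ x.2 - μ x.1|) ''
      {x | IsNonresonant T M x.1 x.2}) := by
  simp only [smallDivisor, image, mem_ofPred_eq, Prod.exists, eq_comm]

variable {μ : ι → ℝ}

lemma continuousAt_smallDivisor (hμ : ∀ i, μ i ≠ 0) (T : ι → ℤ) (M : ℤ) :
    ContinuousAt (fun μ' => smallDivisor μ' T M) μ := by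
  simp only [smallDivisor_eq_sInf_image]
  exact continuousAt_sInf_image (finite_isNonresonant T M) fun x _ =>
    ((continuousAt_laurentMonomial hμ x.2).sub (continuousAt_apply x.1 μ)).abs

lemma smallDivisor_pos (hμ : ∀ i, μ i ≠ 0)
    (hT : ∀ S, laurentMonomial μ S = 1 → ∃ m : ℤ, S = m • T) (hM : M < 2 * ∑ i, |T i|)
    (hne : ∃ j R, IsNonresonant T M j R) : 0 < smallDivisor μ T M := by
  obtain ⟨j₀, R₀, h₀⟩ := hne
  have hattained := (Set.Nonempty.image _ ⟨(j₀, R₀), h₀⟩).csInf_mem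
    ((finite_isNonresonant T M).image fun x => |laurentMonomial μ x.2 - μ x.1|)
  rw [← smallDivisor_eq_sInf_image] at hattained
  obtain ⟨⟨j, R⟩, h, hmin⟩ := hattained
  rw [← hmin, abs_pos, sub_ne_zero]
  intro heq
  obtain ⟨m, hm⟩ := hT (R - Pi.single j 1) (by
    rw [laurentMonomial_sub hμ, laurentMonomial_single, heq, div_self (hμ j)])
  exact h.sub_single_ne_zsmul hM m hm

lemma eventually_abs_laurentMonomial_sub_lt_smallDivisor_pow (hμ : ∀ i, μ i ≠ 0)
    (hT : ∀ S, laurentMonomial μ S = 1 → ∃ m : ℤ, S = m • T) (hM : M < 2 * ∑ i, |T i|)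
    (hne : ∃ j R, IsNonresonant T M j R) {P : ι → ℤ} (hP : laurentMonomial μ P = μ j)
    {C : ℝ} (hC : 0 < C) (N : ℕ) :
    ∀ᶠ μ' in 𝓝 μ, |laurentMonomial μ' P - μ' j| < (C * smallDivisor μ' T M) ^ N := by
  have hΔ := smallDivisor_pos hμ hT hM hne
  refine ContinuousAt.eventually_lt
    ((continuousAt_laurentMonomial hμ P).sub (continuousAt_apply j μ)).abs
    (((continuousAt_smallDivisor hμ T M).const_mul C).pow N) ?_
  rw [hP, sub_self, abs_zero]
  positivity

end SmallDivisor

section Multipliers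

variable {θ ν : ℝ}

/-- The multipliers `(e⁻¹, e^ν, e^θ)` of the paper, whose last exponent `e` is generalized to a
real `θ`. -/
noncomputable def multipliers (θ ν : ℝ) : Fin 3 → ℝ :=
  ![Real.exp (-1), Real.exp ν, Real.exp θ]

lemma multipliers_pos (θ ν : ℝ) (i : Fin 3) : 0 < multipliers θ ν i := by
  fin_cases i <;> exact Real.exp_pos _

lemma continuous_multipliers (θ : ℝ) : Continuous (multipliers θ) :=
  continuous_pi fun i => by fin_cases i <;> simp only [multipliers] <;> fun_prop

lemma laurentMonomial_multipliers_natCast (p q : ℕ) :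
    laurentMonomial (multipliers θ ν) ![p, q, 0] = Real.exp (-1) ^ p * Real.exp ν ^ q := by
  simp [laurentMonomial, multipliers, Fin.prod_univ_three]

lemma laurentMonomial_multipliers_eq_one_iff {R : Fin 3 → ℤ} :
    laurentMonomial (multipliers θ ν) R = 1 ↔ R 1 * ν + R 2 * θ = R 0 := by
  rw [laurentMonomial_eq_one_iff_sum_mul_log (multipliers_pos θ ν), Fin.sum_univ_three]
  simp only [multipliers, Matrix.cons_val, Real.log_exp]
  constructor <;> intro h <;> linarith

lemma subsingleton_setOf_laurentMonomial_multipliers_eq_one (hθ : Irrational θ) {R : Fin 3 → ℤ}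
    (hR : R ≠ 0) : {ν | laurentMonomial (multipliers θ ν) R = 1}.Subsingleton := by
  intro ν hν ν' hν'
  rw [mem_ofPred_eq, laurentMonomial_multipliers_eq_one_iff] at hν hν'
  have hR1 : R 1 ≠ 0 := by
    intro h1
    have hrel : ((-R 0 : ℤ) : ℝ) + R 2 * θ = 0 := by
      push_cast
      simp only [h1, Int.cast_zero, zero_mul, zero_add] at hν
      linarith
    obtain ⟨h0, h2⟩ := (intCast_add_intCast_mul_irrational_eq_zero_iff hθ).mp hrel
    refine hR (funext fun i => ?_)
    fin_cases i
    exacts [neg_eq_zero.mp h0, h1, h2]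
  exact mul_left_cancel₀ (Int.cast_ne_zero.mpr hR1) (by linarith)

lemma eventually_residual_laurentMonomial_multipliers_ne_one (hθ : Irrational θ) :
    ∀ᶠ ν in residual ℝ, ∀ R ≠ 0, laurentMonomial (multipliers θ ν) R ≠ 1 := by
  simp only [eventually_countable_forall]
  intro R hR
  have hfinite := (subsingleton_setOf_laurentMonomial_multipliers_eq_one hθ hR).finite
  exact residual_of_dense_open hfinite.isClosed.isOpen_compl (hfinite.countable.dense_compl ℝ)

lemma eq_zsmul_of_laurentMonomial_multipliers_eq_one (hθ : Irrational θ) {p q : ℤ} (hq : q ≠ 0)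
    {S : Fin 3 → ℤ} (hS : laurentMonomial (multipliers θ ((p + θ) / q)) S = 1) :
    ∃ m : ℤ, S = m • ![p, q, -1] := by
  rw [laurentMonomial_multipliers_eq_one_iff] at hS
  have hqℝ : (q : ℝ) ≠ 0 := Int.cast_ne_zero.mpr hq
  have hrel : ((S 1 * p - S 0 * q : ℤ) : ℝ) + ((S 1 + S 2 * q : ℤ) : ℝ) * θ = 0 := by
    field_simp at hS
    push_cast
    linarith
  obtain ⟨hrat, hirr⟩ := (intCast_add_intCast_mul_irrational_eq_zero_iff hθ).mp hrel
  have h1 : S 1 = -S 2 * q := by linarith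
  have h0 : S 0 = -S 2 * p := mul_right_cancel₀ hq (by rw [h1] at hrat; linarith)
  refine ⟨-S 2, funext fun i => ?_⟩
  fin_cases i <;> simp [h0, h1]

lemma eventually_nhds_abs_sub_lt_smallDivisor_pow (hθ : Irrational θ) {p q : ℕ} (hq : 0 < q)
    {C : ℝ} (hC : 0 < C) (N : ℕ) :
    ∀ᶠ ν in 𝓝 ((p + θ) / q), |Real.exp (-1) ^ p * Real.exp ν ^ q - Real.exp θ| <
      (C * smallDivisor (multipliers θ ν) ![p, q, -1] (2 * (p + q) + 1)) ^ N := by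
  have hqℝ : (q : ℝ) ≠ 0 := by positivity
  have hresonant : laurentMonomial (multipliers θ ((p + θ) / q)) ![p, q, 0] =
      multipliers θ ((p + θ) / q) 2 := by
    rw [laurentMonomial_multipliers_natCast, ← Real.exp_nat_mul, ← Real.exp_nat_mul,
      ← Real.exp_add]
    congr 1
    field_simp
    ring
  have hrelations (S : Fin 3 → ℤ) (hS : laurentMonomial (multipliers θ ((p + θ) / q)) S = 1) :
      ∃ m : ℤ, S = m • ![(p : ℤ), q, -1] :=
    eq_zsmul_of_laurentMonomial_multipliers_eq_one hθ (by exact_mod_cast hq.ne')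
      (by exact_mod_cast hS)
  have horder : 2 * ((p : ℤ) + q) + 1 < 2 * ∑ i, |![(p : ℤ), q, -1] i| := by
    simp only [Fin.sum_univ_three, Matrix.cons_val, Nat.abs_cast, abs_neg, abs_one]
    omega
  have hnonempty : ∃ j R, IsNonresonant ![(p : ℤ), q, -1] (2 * (p + q) + 1) j R :=
    ⟨0, 0, isNonresonant_zero (i := 2) (by decide) (by simp) (by positivity)⟩
  have hev := (continuous_multipliers θ).continuousAt.eventually
    (eventually_abs_laurentMonomial_sub_lt_smallDivisor_pow
      (fun i => (multipliers_pos θ _ i).ne') hrelations horder hnonempty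
      hresonant hC N)
  simp only [laurentMonomial_multipliers_natCast] at hev
  exact hev

lemma eventually_residual_exists_abs_sub_lt_smallDivisor_pow (hθ : Irrational θ) {C : ℝ}
    (hC : 0 < C) (N : ℕ → ℕ → ℕ) :
    ∀ᶠ ν in residual ℝ, ν ∈ Ioi 0 → ∃ p q : ℕ, 0 < p ∧ 0 < q ∧
      |Real.exp (-1) ^ p * Real.exp ν ^ q - Real.exp θ| <
        (C * smallDivisor (multipliers θ ν) ![p, q, -1] (2 * (p + q) + 1)) ^ N p q := by
  refine eventually_residual_of_subset_closure (Ioi_zero_subset_closure_natCast_add_div θ) ?_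
  rintro _ ⟨p, q, hp, hq, rfl⟩
  filter_upwards [eventually_nhds_abs_sub_lt_smallDivisor_pow hθ hq hC (N p q)] with ν hν
  exact ⟨p, q, hp, hq, hν⟩

end Multipliers

theorem stmt_2_general {θ : ℝ} (hθ : Irrational θ) {a b : ℝ} (ha : 0 ≤ a) (hab : a < b) {C : ℝ}
    (hC : 0 < C) (N : ℕ → ℕ → ℕ → ℕ) :
    ∃ (ν : ℝ) (p q : ℕ → ℕ), ν ∈ Ioo a b ∧ (∀ k, 0 < p k ∧ 0 < q k) ∧
      (∀ R ≠ 0, laurentMonomial (multipliers θ ν) R ≠ 1) ∧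
      ∀ k, |Real.exp (-1) ^ p k * Real.exp ν ^ q k - Real.exp θ| <
        (C * smallDivisor (multipliers θ ν) ![p k, q k, -1] (2 * (p k + q k) + 1)) ^
          N k (p k) (q k) := by
  have hgeneric := (eventually_residual_laurentMonomial_multipliers_ne_one hθ).and
    (eventually_countable_forall.mpr fun k =>
      eventually_residual_exists_abs_sub_lt_smallDivisor_pow hθ hC (N k))
  obtain ⟨ν, ⟨hrelations, happrox⟩, hν⟩ :=
    (dense_of_mem_residual hgeneric).exists_mem_open isOpen_Ioo (nonempty_Ioo.mpr hab)
  choose p q hp hq hlt using fun k => happrox k (ha.trans_lt hν.1)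
  exact ⟨ν, p, q, hν, fun k => ⟨hp k, hq k⟩, hrelations, hlt⟩

/-- Given an increasing sequence `(L_k)` of positive integers tending to infinity, there exist
`ν ∈ (0,1/2)`, sequences of positive integers `(p_k)`, `(q_k)` and a constant `C > 0` such that,
with `μ = (e^{−1}, e^ν, e^e)` and `P_k = (p_k,q_k,0)`: (a) `μ^R ≠ 1` for every nonzero `R ∈ ℤ³`;
(b) `|μ^{P_k} − μ₃| ≤ (C·Δ*(P_k))^{|P_k|·L_k}` where `Δ*(P_k)` is the minimum of `|μ^R − μ_j|`
over `j ∈ {1,2,3}` and `R ∈ ℤ³` with `|R| ≤ 2(p_k+q_k)+1` and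
`R − e_j ∉ {0, ±(p_k,q_k,−1), ±2(p_k,q_k,−1)}`. -/
theorem stmt_2 (L : ℕ → ℕ) (hLpos : ∀ k, 0 < L k) (hLmono : Monotone L)
    (hLtop : Filter.Tendsto L Filter.atTop Filter.atTop) :
    ∃ (ν : ℝ) (p q : ℕ → ℕ) (C : ℝ), 0 < ν ∧ ν < 1 / 2 ∧ (∀ k, 0 < p k ∧ 0 < q k) ∧ 0 < C ∧
      (∀ R : Fin 3 → ℤ, R ≠ 0 →
        (∏ i, (![Real.exp (-1), Real.exp ν, Real.exp (Real.exp 1)]) i ^ R i) ≠ 1) ∧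
      ∀ k : ℕ,
        |Real.exp (-1) ^ (p k : ℤ) * Real.exp ν ^ (q k : ℤ) - Real.exp (Real.exp 1)| ≤
          (C * sInf {x : ℝ | ∃ (j : Fin 3) (R : Fin 3 → ℤ),
              |R 0| + |R 1| + |R 2| ≤ 2 * ((p k : ℤ) + (q k : ℤ)) + 1 ∧
              R - Pi.single j 1 ≠ 0 ∧
              R - Pi.single j 1 ≠ ![(p k : ℤ), (q k : ℤ), -1] ∧
              R - Pi.single j 1 ≠ -![(p k : ℤ), (q k : ℤ), -1] ∧
              R - Pi.single j 1 ≠ (2 : ℤ) • ![(p k : ℤ), (q k : ℤ), -1] ∧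
              R - Pi.single j 1 ≠ -((2 : ℤ) • ![(p k : ℤ), (q k : ℤ), -1]) ∧
              x = |(∏ i, (![Real.exp (-1), Real.exp ν, Real.exp (Real.exp 1)]) i ^ R i) -
                (![Real.exp (-1), Real.exp ν, Real.exp (Real.exp 1)]) j|}) ^
            ((p k + q k) * L k) := by
  obtain ⟨ν, p, q, hν, hpos, hrelations, hlt⟩ := stmt_2_general irrational_exp_one le_rfl
    one_half_pos one_pos fun k p q => (p + q) * L k
  refine ⟨ν, p, q, 1, hν.1, hν.2, hpos, one_pos, hrelations, fun k => le_of_lt ?_⟩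
  simpa only [zpow_natCast, smallDivisor, IsNonresonant, and_assoc, Fin.sum_univ_three,
    laurentMonomial, multipliers] using hlt k
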